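/- arXiv:2401.02273 — 3 statements merged into one kernel-verified Lean document; each statement's English description precedes it below -/
import Mathlib

section
/- For every integer d ≥ 2 there exist a nonempty finite alphabet A and a nonempty subshift X ⊆ A^{ℤ^d} (a nonempty closed shift-invariant subset of the full shift) which is strongly irreducible with some gap g ≥ 0 and which contains no periodic point (no point of X has a finite orbit under the shift ℤ^d-action). -/
/-- Euclidean distance between two sites of `ℤ^d`. -/
noncomputable def edistZd (d : ℕ) (u v : Fin d → ℤ) : ℝ :=
  Real.sqrt (∑ i, ((u i - v i : ℤ) : ℝ) ^ 2)

/-- The shift `ℤ^d`-action on the full shift: `(σ_v x)_u = x_{u+v}`. -/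
def shiftZd {d : ℕ} {A : Type*} (v : Fin d → ℤ) (x : (Fin d → ℤ) → A) :
    (Fin d → ℤ) → A := fun u => x (u + v)

/-- The product topology on the full shift `A^{ℤ^d}`, with `A` discrete. -/
def fullShiftTopZd (d : ℕ) (A : Type*) : TopologicalSpace ((Fin d → ℤ) → A) :=
  @Pi.topologicalSpace (Fin d → ℤ) (fun _ => A) (fun _ => ⊥)


/-!
Proof idea.  Fix the irrational constant `c = 1 + √2`.  A configuration `z` is admissible when
`z = c + D₀ a + D₁ b` for some `a b : ℤ^d → [0,1]`, where `D_i` is the difference operator in the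
`i`-th coordinate direction.  Averages over large boxes are then forced to be `c`, which excludes
periodic points.  Modulo 1 the difference of two flows is divergence free, hence it has a stream
function `H`, and cutting `H` off glues any two configurations with a uniform gap.
-/

namespace SIAper

/-- Discrete antiderivative on `ℤ`. -/
noncomputable def anti (f : ℤ → ℝ) (n : ℤ) : ℝ :=
  ∑ k ∈ Finset.Ico 0 n, f k - ∑ k ∈ Finset.Ico n 0, f k

theorem anti_succ (f : ℤ → ℝ) (n : ℤ) : anti f (n + 1) = anti f n + f n := by
  unfold anti
  rcases le_or_gt 0 n with h | h
  · have h1 : Finset.Ico 0 (n + 1) = insert n (Finset.Ico 0 n) := by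
      ext k; simp only [Finset.mem_Ico, Finset.mem_insert]; omega
    have h2 : Finset.Ico (n + 1) 0 = ∅ := by
      ext k; simp only [Finset.mem_Ico, Finset.notMem_empty, iff_false]; omega
    have h3 : Finset.Ico n 0 = ∅ := by
      ext k; simp only [Finset.mem_Ico, Finset.notMem_empty, iff_false]; omega
    rw [h1, h2, h3, Finset.sum_insert (by simp)]
    simp; ring
  · have h1 : Finset.Ico n 0 = insert n (Finset.Ico (n + 1) 0) := by
      ext k; simp only [Finset.mem_Ico, Finset.mem_insert]; omega
    have h2 : Finset.Ico 0 (n + 1) = ∅ := by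
      ext k; simp only [Finset.mem_Ico, Finset.notMem_empty, iff_false]; omega
    have h3 : Finset.Ico 0 n = ∅ := by
      ext k; simp only [Finset.mem_Ico, Finset.notMem_empty, iff_false]; omega
    rw [h1, h2, h3, Finset.sum_insert (by simp)]
    simp

/-- Being an integer. -/
def IsI (r : ℝ) : Prop := ∃ m : ℤ, r = m

theorem IsI.add {r s : ℝ} (hr : IsI r) (hs : IsI s) : IsI (r + s) := by
  obtain ⟨m, rfl⟩ := hr; obtain ⟨n, rfl⟩ := hs; exact ⟨m + n, by push_cast; ring⟩

theorem IsI.sub {r s : ℝ} (hr : IsI r) (hs : IsI s) : IsI (r - s) := by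
  obtain ⟨m, rfl⟩ := hr; obtain ⟨n, rfl⟩ := hs; exact ⟨m - n, by push_cast; ring⟩

theorem isI_fract (r : ℝ) : IsI (Int.fract r - r) :=
  ⟨-⌊r⌋, by push_cast; rw [← Int.self_sub_floor]; ring⟩

variable {d : ℕ}

/-- Stream function of a flow that is divergence free modulo 1. -/
theorem exists_stream (i0 i1 : Fin d) (h01 : i0 ≠ i1) (p q : (Fin d → ℤ) → ℝ)
    (hpq : ∀ u, IsI (p (u + Pi.single i0 1) - p u + (q (u + Pi.single i1 1) - q u))) :
    ∃ H : (Fin d → ℤ) → ℝ, (∀ u, H (u + Pi.single i1 1) - H u = p u) ∧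
      ∀ u, IsI (q u + (H (u + Pi.single i0 1) - H u)) := by
  classical
  let H : (Fin d → ℤ) → ℝ := fun u =>
    anti (fun i => - q (Function.update (Function.update u i0 i) i1 0)) (u i0)
      + anti (fun j => p (Function.update u i1 j)) (u i1)
  have hH1 : ∀ u, H (u + Pi.single i1 1) - H u = p u := by
    intro u
    have e1 : ∀ i, Function.update (Function.update (u + Pi.single i1 1) i0 i) i1 0
        = Function.update (Function.update u i0 i) i1 0 := by
      intro i; ext k
      by_cases hk1 : k = i1
      · subst hk1; simp
      · by_cases hk0 : k = i0
        · subst hk0; simp [hk1]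
        · simp [hk1, hk0]
    have e2 : ∀ j, Function.update (u + Pi.single i1 1) i1 j = Function.update u i1 j := by
      intro i; ext k
      by_cases hk1 : k = i1
      · subst hk1; simp
      · simp [hk1]
    have e3 : (u + Pi.single i1 1 : Fin d → ℤ) i0 = u i0 := by simp [h01]
    have e4 : (u + Pi.single i1 1 : Fin d → ℤ) i1 = u i1 + 1 := by simp
    simp only [H, e1, e2, e3, e4, anti_succ, Function.update_eq_self]
    ring
  refine ⟨H, hH1, ?_⟩
  -- the coordinate along `i1` is treated by induction
  have base : ∀ u : Fin d → ℤ, u i1 = 0 → IsI (q u + (H (u + Pi.single i0 1) - H u)) := by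
    intro u hu
    have e1 : ∀ i, Function.update (Function.update (u + Pi.single i0 1) i0 i) i1 0
        = Function.update (Function.update u i0 i) i1 0 := by
      intro i; ext k
      by_cases hk1 : k = i1
      · subst hk1; simp
      · by_cases hk0 : k = i0
        · subst hk0; simp [hk1]
        · simp [hk1, hk0]
    have e3 : (u + Pi.single i0 1 : Fin d → ℤ) i0 = u i0 + 1 := by simp
    have e4 : (u + Pi.single i0 1 : Fin d → ℤ) i1 = 0 := by simp [h01.symm, hu]
    have e5 : Function.update u i1 0 = u := by rw [← hu]; simp
    have a0 : ∀ f, anti f 0 = 0 := by intro f; simp [anti]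
    simp only [H, e1, e3, e4, hu, a0, anti_succ, Function.update_eq_self, e5]
    exact ⟨0, by push_cast; ring⟩
  have step : ∀ u : Fin d → ℤ, IsI ((q (u + Pi.single i1 1)
        + (H (u + Pi.single i1 1 + Pi.single i0 1) - H (u + Pi.single i1 1)))
        - (q u + (H (u + Pi.single i0 1) - H u))) := by
    intro u
    have h1 := hH1 u
    have h2 := hH1 (u + Pi.single i0 1)
    rw [add_right_comm] at h2
    have := hpq u
    convert this using 1
    linarith
  have key : ∀ (j : ℤ) (u : Fin d → ℤ), u i1 = 0 →
      IsI (q (u + Pi.single i1 j)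
        + (H (u + Pi.single i1 j + Pi.single i0 1) - H (u + Pi.single i1 j))) := by
    intro j u hu
    induction j using Int.induction_on with
    | zero => simpa using base u hu
    | succ k ih =>
      have := (step (u + Pi.single i1 (k : ℤ))).add ih
      rw [sub_add_cancel] at this
      rw [Pi.single_add, ← add_assoc]
      exact this
    | pred k ih =>
      have := ih.sub (step (u + Pi.single i1 (-(k : ℤ) - 1)))
      have e : u + Pi.single i1 (-(k : ℤ) - 1) + Pi.single i1 1 = u + Pi.single i1 (-(k : ℤ)) := by
        rw [add_assoc, ← Pi.single_add]; simp
      rw [e] at this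
      rw [sub_sub_cancel] at this
      exact this
  intro u
  have := key (u i1) (Function.update u i1 0) (by simp)
  have e : Function.update u i1 0 + Pi.single i1 (u i1) = u := by
    ext k
    by_cases hk1 : k = i1
    · subst hk1; simp
    · simp [hk1]
  rw [e] at this
  exact this

/-- The flow relation. -/
def Rel (i0 i1 : Fin d) (z : (Fin d → ℤ) → Fin 6) (a b : (Fin d → ℤ) → ℝ) : Prop :=
  ∀ u, ((z u : ℕ) : ℝ) = 1 + √2 + (a (u + Pi.single i0 1) - a u) + (b (u + Pi.single i1 1) - b u)

/-- The subshift. -/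
def XX (i0 i1 : Fin d) : Set ((Fin d → ℤ) → Fin 6) :=
  {z | ∃ a b : (Fin d → ℤ) → unitInterval, Rel i0 i1 z (fun u => a u) (fun u => b u)}

theorem sqrt2_bounds : 1 < √2 ∧ √2 < 2 := by
  constructor
  · rw [Real.lt_sqrt] <;> norm_num
  · rw [Real.sqrt_lt'] <;> norm_num

/-- A flow with the right residue defines a configuration. -/
theorem exists_config (i0 i1 : Fin d) (a b : (Fin d → ℤ) → unitInterval)
    (h : ∀ u, IsI (√2 + ((a (u + Pi.single i0 1) : ℝ) - a u)
      + ((b (u + Pi.single i1 1) : ℝ) - b u))) :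
    ∃ z, Rel i0 i1 z (fun u => a u) (fun u => b u) := by
  have : ∀ u, ∃ k : Fin 6, ((k : ℕ) : ℝ) = 1 + √2 + ((a (u + Pi.single i0 1) : ℝ) - a u)
      + ((b (u + Pi.single i1 1) : ℝ) - b u) := by
    intro u
    obtain ⟨m, hm⟩ := h u
    obtain ⟨s1, s2⟩ := sqrt2_bounds
    have a1 := (a (u + Pi.single i0 1)).2
    have a2 := (a u).2
    have b1 := (b (u + Pi.single i1 1)).2
    have b2 := (b u).2
    simp only [Set.mem_Icc] at a1 a2 b1 b2
    have l1 : (-1 : ℝ) < m := by rw [← hm]; linarith [a1.1, a2.2, b1.1, b2.2]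
    have l2 : (m : ℝ) < 4 := by rw [← hm]; linarith [a1.2, a2.1, b1.2, b2.1]
    have l1' : -1 < m := by exact_mod_cast l1
    have l2' : m < 4 := by exact_mod_cast l2
    refine ⟨⟨(m + 1).toNat, by omega⟩, ?_⟩
    have : (((m + 1).toNat : ℤ) : ℝ) = ((m + 1 : ℤ) : ℝ) := by
      rw [Int.toNat_of_nonneg (by omega)]
    simp only [Int.cast_natCast] at this
    simp only [this]
    push_cast
    rw [← hm]; ring
  choose z hz using this
  exact ⟨z, hz⟩

theorem nonempty_XX (i0 i1 : Fin d) : (XX i0 i1).Nonempty := by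
  let a : (Fin d → ℤ) → unitInterval := fun u =>
    ⟨Int.fract (-√2 * (u i0 : ℝ)), Int.fract_nonneg _, (Int.fract_lt_one _).le⟩
  let b : (Fin d → ℤ) → unitInterval := fun _ => 0
  obtain ⟨z, hz⟩ := exists_config i0 i1 a b (by
    intro u
    have h1 := isI_fract (-√2 * (((u + Pi.single i0 1 : Fin d → ℤ) i0 : ℤ) : ℝ))
    have h2 := isI_fract (-√2 * (u i0 : ℝ))
    have := h1.sub h2
    convert this using 1
    simp [a, b]
    ring)
  exact ⟨z, a, b, hz⟩

theorem shift_XX (i0 i1 : Fin d) (v : Fin d → ℤ) (x) (hx : x ∈ XX i0 i1) :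
    shiftZd v x ∈ XX i0 i1 := by
  obtain ⟨a, b, h⟩ := hx
  refine ⟨fun u => a (u + v), fun u => b (u + v), fun u => ?_⟩
  have := h (u + v)
  simp only [shiftZd, add_right_comm u _ v]
  exact this

theorem closed_XX (i0 i1 : Fin d) : IsClosed (XX i0 i1) := by
  let K : Set (((Fin d → ℤ) → Fin 6) × (((Fin d → ℤ) → unitInterval) × ((Fin d → ℤ) → unitInterval))) :=
    {t | Rel i0 i1 t.1 (fun u => t.2.1 u) (fun u => t.2.2 u)}
  have hK : IsClosed K := by
    simp only [K, Rel, Set.ofPred_forall]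
    refine isClosed_iInter fun u => isClosed_eq ?_ ?_
    · have : Continuous (fun k : Fin 6 => ((k : ℕ) : ℝ)) := continuous_of_discreteTopology
      exact this.comp ((continuous_apply u).comp continuous_fst)
    · fun_prop
  have : XX i0 i1 = Set.image Prod.fst K := by
    ext z
    constructor
    · rintro ⟨a, b, h⟩; exact ⟨(z, a, b), h, rfl⟩
    · rintro ⟨⟨z', a, b⟩, h, rfl⟩; exact ⟨a, b, h⟩
  rw [this]
  exact isClosedMap_fst_of_compactSpace _ hK

/-- Gluing with respect to a cutoff set `S`. -/
theorem glue_XX (i0 i1 : Fin d) (h01 : i0 ≠ i1) (S : Set (Fin d → ℤ)) (x y)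
    (hx : x ∈ XX i0 i1) (hy : y ∈ XX i0 i1) :
    ∃ z ∈ XX i0 i1,
      (∀ u, u ∉ S → u + Pi.single i0 1 ∉ S → u + Pi.single i1 1 ∉ S →
        u + Pi.single i0 1 + Pi.single i1 1 ∉ S → z u = x u) ∧
      (∀ u, u ∈ S → u + Pi.single i0 1 ∈ S → u + Pi.single i1 1 ∈ S →
        u + Pi.single i0 1 + Pi.single i1 1 ∈ S → z u = y u) := by
  classical
  obtain ⟨a, b, hab⟩ := hx
  obtain ⟨a', b', hab'⟩ := hy
  obtain ⟨H, hH1, hH0⟩ := exists_stream i0 i1 h01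
    (fun u => (a' u : ℝ) - a u) (fun u => (b' u : ℝ) - b u) (by
      intro u
      refine ⟨(y u : ℕ) - (x u : ℕ), ?_⟩
      have h1 := hab u
      have h2 := hab' u
      push_cast
      rw [h1, h2]; ring)
  let G : (Fin d → ℤ) → ℝ := fun u => if u ∈ S then H u else 0
  have key : ∀ (i : Fin d) (c c' : (Fin d → ℤ) → unitInterval) (s : ℝ)
      (hc : ∀ u, IsI ((c' u : ℝ) - c u - s * (H (u + Pi.single i 1) - H u))),
      ∃ e : (Fin d → ℤ) → unitInterval,
        (∀ u, IsI ((e u : ℝ) - c u - s * (G (u + Pi.single i 1) - G u))) ∧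
        (∀ u, u ∉ S → u + Pi.single i 1 ∉ S → e u = c u) ∧
        (∀ u, u ∈ S → u + Pi.single i 1 ∈ S → e u = c' u) := by
    intro i c c' s hc
    have : ∀ u, ∃ e : unitInterval, IsI ((e : ℝ) - c u - s * (G (u + Pi.single i 1) - G u)) ∧
        (u ∉ S → u + Pi.single i 1 ∉ S → e = c u) ∧
        (u ∈ S → u + Pi.single i 1 ∈ S → e = c' u) := by
      intro u
      by_cases h1 : u ∈ S <;> by_cases h2 : u + Pi.single i 1 ∈ S
      · refine ⟨c' u, ?_, by simp [h1], by simp⟩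
        simpa [G, h1, h2] using hc u
      · refine ⟨⟨Int.fract (c u + s * (G (u + Pi.single i 1) - G u)), Int.fract_nonneg _,
          (Int.fract_lt_one _).le⟩, ?_, by simp [h1], by simp [h2]⟩
        convert isI_fract (c u + s * (G (u + Pi.single i 1) - G u)) using 1
        ring
      · refine ⟨⟨Int.fract (c u + s * (G (u + Pi.single i 1) - G u)), Int.fract_nonneg _,
          (Int.fract_lt_one _).le⟩, ?_, by simp [h2], by simp [h1]⟩
        convert isI_fract (c u + s * (G (u + Pi.single i 1) - G u)) using 1
        ring
      · refine ⟨c u, ?_, by simp, by simp [h1]⟩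
        exact ⟨0, by simp [G, h1, h2]⟩
    choose e he using this
    exact ⟨e, fun u => (he u).1, fun u => (he u).2.1, fun u => (he u).2.2⟩
  obtain ⟨A, hA, hA0, hA1⟩ := key i1 a a' 1 (by
    intro u; exact ⟨0, by rw [hH1 u]; simp⟩)
  obtain ⟨B, hB, hB0, hB1⟩ := key i0 b b' (-1) (by
    intro u; convert hH0 u using 1; ring)
  obtain ⟨z, hz⟩ := exists_config i0 i1 A B (by
    intro u
    have k1 := (hA (u + Pi.single i0 1)).sub (hA u)
    have k2 := (hB (u + Pi.single i1 1)).sub (hB u)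
    have k3 : IsI (√2 + ((a (u + Pi.single i0 1) : ℝ) - a u)
      + ((b (u + Pi.single i1 1) : ℝ) - b u)) := by
      refine ⟨(x u : ℕ) - 1, ?_⟩
      push_cast
      rw [hab u]; ring
    convert (k1.add k2).add k3 using 1
    rw [add_right_comm u (Pi.single i1 1) (Pi.single i0 1)]
    ring)
  have cast_inj : ∀ k l : Fin 6, ((k : ℕ) : ℝ) = ((l : ℕ) : ℝ) → k = l := by
    intro k l h; exact Fin.ext (by exact_mod_cast h)
  refine ⟨z, ⟨A, B, hz⟩, ?_, ?_⟩
  · intro u h1 h2 h3 h4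
    apply cast_inj
    rw [hz u, hab u]
    simp only [hA0 u h1 h3, hA0 _ h2 h4, hB0 u h1 h2,
      hB0 _ h3 (by rwa [add_right_comm] at h4)]
  · intro u h1 h2 h3 h4
    apply cast_inj
    rw [hz u, hab' u]
    simp only [hA1 u h1 h3, hA1 _ h2 h4, hB1 u h1 h2,
      hB1 _ h3 (by rwa [add_right_comm] at h4)]

/-- Being far apart separates the unit squares based at the points. -/
theorem not_far (i0 i1 : Fin d) (h01 : i0 ≠ i1) (u v : Fin d → ℤ) (s t s' t' : ℤ)
    (hs : 0 ≤ s ∧ s ≤ 1) (ht : 0 ≤ t ∧ t ≤ 1) (hs' : 0 ≤ s' ∧ s' ≤ 1) (ht' : 0 ≤ t' ∧ t' ≤ 1)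
    (h : u + Pi.single i0 s + Pi.single i1 t = v + Pi.single i0 s' + Pi.single i1 t') :
    ¬ edistZd d u v > 2 := by
  have e : ∀ i, u i - v i = (Pi.single i0 (s' - s) : Fin d → ℤ) i
      + (Pi.single i1 (t' - t) : Fin d → ℤ) i := by
    intro i
    have := congrFun h i
    simp only [Pi.add_apply, Pi.single_sub, Pi.sub_apply] at this ⊢
    linarith
  have e0 : u i0 - v i0 = s' - s := by rw [e]; simp [h01]
  have e1 : u i1 - v i1 = t' - t := by rw [e]; simp [h01.symm]
  have e2 : ∀ i, i ≠ i0 → i ≠ i1 → u i - v i = 0 := by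
    intro i h0 h1; rw [e]; simp [h0, h1]
  have hsum : ∑ i, (u i - v i) ^ 2 = (s' - s) ^ 2 + (t' - t) ^ 2 := by
    rw [← e0, ← e1, ← Finset.sum_pair (f := fun i => (u i - v i) ^ 2) h01]
    symm
    apply Finset.sum_subset (Finset.subset_univ _)
    intro i _ hi
    simp only [Finset.mem_insert, Finset.mem_singleton, not_or] at hi
    rw [e2 i hi.1 hi.2]; norm_num
  have hle : ∑ i, (u i - v i) ^ 2 ≤ 4 := by rw [hsum]; nlinarith
  have hle' : ∑ i, ((u i - v i : ℤ) : ℝ) ^ 2 ≤ 4 := by exact_mod_cast hle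
  rw [not_lt, edistZd, Real.sqrt_le_left (by norm_num)]
  linarith

/-- Periodic sums. -/
theorem sum_periodic (f : ℕ → ℝ) (n : ℕ) (hf : ∀ k, f (n + k) = f k) (N : ℕ) :
    ∑ k ∈ Finset.range (n * N), f k = N * ∑ k ∈ Finset.range n, f k := by
  induction N with
  | zero => simp
  | succ N ih =>
    rw [Nat.mul_succ, add_comm, Finset.sum_range_add]
    simp only [hf]
    rw [ih]; push_cast; ring

theorem exists_period (x : (Fin d → ℤ) → Fin 6) (i : Fin d)
    (hfin : (Set.range fun v : Fin d → ℤ => shiftZd v x).Finite) :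
    ∃ n : ℕ, 0 < n ∧ ∀ u, x (u + Pi.single i (n : ℤ)) = x u := by
  let f : ℕ → (Fin d → ℤ) → Fin 6 := fun k => shiftZd (Pi.single i (k : ℤ)) x
  have : ¬ Function.Injective f := by
    intro hinj
    exact Set.infinite_range_of_injective hinj
      (hfin.subset (by rintro _ ⟨k, rfl⟩; exact ⟨_, rfl⟩))
  have h2 : ∃ k l, k < l ∧ f k = f l := by
    simp only [Function.Injective, not_forall] at this
    obtain ⟨k, l, h, hne⟩ := this
    rcases lt_or_gt_of_ne hne with h' | h'
    · exact ⟨k, l, h', h⟩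
    · exact ⟨l, k, h', h.symm⟩
  obtain ⟨k, l, hkl, h⟩ := h2
  refine ⟨l - k, by omega, fun u => ?_⟩
  have := congrFun h (u - Pi.single i (k : ℤ))
  simp only [f, shiftZd, sub_add_cancel] at this
  rw [this, Nat.cast_sub hkl.le, Pi.single_sub]
  congr 1
  abel

theorem aper_XX (i0 i1 : Fin d) (x) (hx : x ∈ XX i0 i1) :
    ¬ (Set.range fun v : Fin d → ℤ => shiftZd v x).Finite := by
  intro hfin
  obtain ⟨a, b, hab⟩ := hx
  obtain ⟨n, hn, hnp⟩ := exists_period x i0 hfin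
  obtain ⟨m, hm, hmp⟩ := exists_period x i1 hfin
  let P : ℕ → ℕ → (Fin d → ℤ) := fun i j => Pi.single i0 (i : ℤ) + Pi.single i1 (j : ℤ)
  have P0 : ∀ i j, P i j + Pi.single i0 1 = P (i + 1) j := by
    intro i j; simp only [P]; push_cast; rw [Pi.single_add]; abel
  have P1 : ∀ i j, P i j + Pi.single i1 1 = P i (j + 1) := by
    intro i j; simp only [P]; push_cast; rw [Pi.single_add]; abel
  have Pn : ∀ i j, x (P (n + i) j) = x (P i j) := by
    intro i j
    rw [← hnp (P i j)]
    congr 1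
    simp only [P]; push_cast; rw [Pi.single_add]; abel
  have Pm : ∀ i j, x (P i (m + j)) = x (P i j) := by
    intro i j
    rw [← hmp (P i j)]
    congr 1
    simp only [P]; push_cast; rw [Pi.single_add]; abel
  let S : ℕ := ∑ i ∈ Finset.range n, ∑ j ∈ Finset.range m, (x (P i j) : ℕ)
  let δ : ℝ := S - n * m * (1 + √2)
  have main : ∀ N : ℕ, 0 < N → (N : ℝ) * |δ| ≤ n + m := by
    intro N hN
    have s1 : ∑ i ∈ Finset.range (n * N), ∑ j ∈ Finset.range (m * N), ((x (P i j) : ℕ) : ℝ)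
        = N * (N * S) := by
      have inner : ∀ i, ∑ j ∈ Finset.range (m * N), ((x (P i j) : ℕ) : ℝ)
          = N * ∑ j ∈ Finset.range m, ((x (P i j) : ℕ) : ℝ) :=
        fun i => sum_periodic (fun j => ((x (P i j) : ℕ) : ℝ)) m (fun j => by rw [Pm]) N
      simp only [inner]
      rw [sum_periodic (fun i => N * ∑ j ∈ Finset.range m, ((x (P i j) : ℕ) : ℝ)) n
        (fun i => by simp only [Pn]) N, ← Finset.mul_sum]
      simp only [S]; push_cast; rfl
    have s2 : ∑ i ∈ Finset.range (n * N), ∑ j ∈ Finset.range (m * N), ((x (P i j) : ℕ) : ℝ)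
        = (n * N) * (m * N) * (1 + √2)
          + ∑ j ∈ Finset.range (m * N), ((a (P (n * N) j) : ℝ) - a (P 0 j))
          + ∑ i ∈ Finset.range (n * N), ((b (P i (m * N)) : ℝ) - b (P i 0)) := by
      have : ∀ i j, ((x (P i j) : ℕ) : ℝ) = (1 + √2) + ((a (P (i + 1) j) : ℝ) - a (P i j))
          + ((b (P i (j + 1)) : ℝ) - b (P i j)) := by
        intro i j
        rw [hab (P i j), P0, P1]
      simp only [this, Finset.sum_add_distrib]
      congr 1
      · congr 1
        · simp; ring
        · rw [Finset.sum_comm]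
          refine Finset.sum_congr rfl fun j _ => ?_
          exact Finset.sum_range_sub (fun i => (a (P i j) : ℝ)) (n * N)
      · refine Finset.sum_congr rfl fun i _ => ?_
        exact Finset.sum_range_sub (fun j => (b (P i j) : ℝ)) (m * N)
    have bd : ∀ s t : unitInterval, |(s : ℝ) - t| ≤ 1 := by
      intro s t
      rw [abs_le]
      constructor <;> linarith [s.2.1, s.2.2, t.2.1, t.2.2]
    have b1 : |∑ j ∈ Finset.range (m * N), ((a (P (n * N) j) : ℝ) - a (P 0 j))| ≤ m * N := by
      refine (Finset.abs_sum_le_sum_abs _ _).trans ?_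
      refine (Finset.sum_le_sum fun j _ => bd _ _).trans ?_
      simp
    have b2 : |∑ i ∈ Finset.range (n * N), ((b (P i (m * N)) : ℝ) - b (P i 0))| ≤ n * N := by
      refine (Finset.abs_sum_le_sum_abs _ _).trans ?_
      refine (Finset.sum_le_sum fun j _ => bd _ _).trans ?_
      simp
    have hN' : (0 : ℝ) < N := by exact_mod_cast hN
    have e : (N : ℝ) * (N * δ)
        = ∑ j ∈ Finset.range (m * N), ((a (P (n * N) j) : ℝ) - a (P 0 j))
          + ∑ i ∈ Finset.range (n * N), ((b (P i (m * N)) : ℝ) - b (P i 0)) := by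
      have := s1.symm.trans s2
      simp only [δ]
      linarith
    have : (N : ℝ) * (N * |δ|) ≤ N * (n + m) := by
      have h3 : |(N : ℝ) * (N * δ)| = N * (N * |δ|) := by
        rw [abs_mul, abs_mul, abs_of_pos hN']
      rw [← h3, e]
      refine (abs_add_le _ _).trans ?_
      linarith
    exact le_of_mul_le_mul_left this hN'
  have hδ : δ = 0 := by
    by_contra hne
    have hpos : 0 < |δ| := abs_pos.mpr hne
    obtain ⟨N, hN⟩ := exists_nat_gt (((n : ℝ) + m) / |δ|)
    have hN0 : 0 < N := by
      have : (0 : ℝ) < N := lt_of_le_of_lt (by positivity) hN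
      exact_mod_cast this
    rw [div_lt_iff₀ hpos] at hN
    linarith [main N hN0]
  have hn' : (n : ℝ) ≠ 0 := by positivity
  have hm' : (m : ℝ) ≠ 0 := by positivity
  have hs : √2 = (((S : ℚ) / (n * m) - 1 : ℚ) : ℝ) := by
    push_cast
    simp only [δ] at hδ
    field_simp
    linarith
  exact irrational_sqrt_two ⟨_, hs.symm⟩

end SIAper

/-- For every `d ≥ 2` there exist a nonempty finite alphabet `A` and a nonempty
subshift `X ⊆ A^{ℤ^d}` that is strongly irreducible with some gap `g ≥ 0` and
contains no periodic point. -/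
theorem exists_SI_aperiodic_subshift (d : ℕ) (hd : 2 ≤ d) :
    ∃ (A : Type) (_ : Fintype A) (_ : Nonempty A)
      (X : Set ((Fin d → ℤ) → A)) (g : ℝ),
      0 ≤ g ∧
      -- `X` is a nonempty closed shift-invariant set
      X.Nonempty ∧
      @IsClosed _ (fullShiftTopZd d A) X ∧
      (∀ v : Fin d → ℤ, ∀ x ∈ X, shiftZd v x ∈ X) ∧
      -- `X` is strongly irreducible with gap `g`
      (∀ E F : Set (Fin d → ℤ),
        (∀ u ∈ E, ∀ v ∈ F, edistZd d u v > g) →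
        ∀ x ∈ X, ∀ y ∈ X,
          ∃ z ∈ X, (∀ u ∈ E, z u = x u) ∧ (∀ u ∈ F, z u = y u)) ∧
      -- `X` has no periodic point
      (∀ x ∈ X, ¬ (Set.range fun v : Fin d → ℤ => shiftZd v x).Finite) := by
  let i0 : Fin d := ⟨0, by omega⟩
  let i1 : Fin d := ⟨1, by omega⟩
  have h01 : i0 ≠ i1 := by simp [i0, i1]
  refine ⟨Fin 6, inferInstance, inferInstance, SIAper.XX i0 i1, 2, by norm_num,
    SIAper.nonempty_XX i0 i1, SIAper.closed_XX i0 i1, SIAper.shift_XX i0 i1, ?_,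
    SIAper.aper_XX i0 i1⟩
  intro E F hEF x hx y hy
  let S : Set (Fin d → ℤ) := {v | ∃ f ∈ F, ∃ s t : ℤ, (0 ≤ s ∧ s ≤ 1) ∧ (0 ≤ t ∧ t ≤ 1) ∧
    v = f + Pi.single i0 s + Pi.single i1 t}
  have hE : ∀ u ∈ E, ∀ s t : ℤ, (0 ≤ s ∧ s ≤ 1) → (0 ≤ t ∧ t ≤ 1) →
      u + Pi.single i0 s + Pi.single i1 t ∉ S := by
    rintro u hu s t hs ht ⟨f, hf, s', t', hs', ht', h⟩
    exact SIAper.not_far i0 i1 h01 u f s t s' t' hs ht hs' ht' h (hEF u hu f hf)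
  have hF : ∀ u ∈ F, ∀ s t : ℤ, (0 ≤ s ∧ s ≤ 1) → (0 ≤ t ∧ t ≤ 1) →
      u + Pi.single i0 s + Pi.single i1 t ∈ S :=
    fun u hu s t hs ht => ⟨u, hu, s, t, hs, ht, rfl⟩
  obtain ⟨z, hz, hz0, hz1⟩ := SIAper.glue_XX i0 i1 h01 S x y hx hy
  refine ⟨z, hz, fun u hu => hz0 u ?_ ?_ ?_ ?_, fun u hu => hz1 u ?_ ?_ ?_ ?_⟩
  · simpa using hE u hu 0 0 (by norm_num) (by norm_num)
  · simpa using hE u hu 1 0 (by norm_num) (by norm_num)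
  · simpa using hE u hu 0 1 (by norm_num) (by norm_num)
  · simpa using hE u hu 1 1 (by norm_num) (by norm_num)
  · simpa using hF u hu 0 0 (by norm_num) (by norm_num)
  · simpa using hF u hu 1 0 (by norm_num) (by norm_num)
  · simpa using hF u hu 0 1 (by norm_num) (by norm_num)
  · simpa using hF u hu 1 1 (by norm_num) (by norm_num)
end

section
/- There exists a sequence (R_n)_{n≥1} of positive integers with R_n → ∞ such that, for the alphabet A = {0,1}, the set X_{(R_n)} ⊆ {0,1}^{ℤ²} is nonempty (and is a closed shift-invariant set), but for every g ≥ 0 the set X_{(R_n)} is not strongly irreducible with gap g. -/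
/-- Euclidean distance between two sites of `ℤ²`. -/
noncomputable def edistZ2 (u v : ℤ × ℤ) : ℝ :=
  Real.sqrt (((u.1 - v.1 : ℤ) : ℝ) ^ 2 + ((u.2 - v.2 : ℤ) : ℝ) ^ 2)

/-- The shift `ℤ²`-action on the full shift: `(σ_v x)_u = x_{u+v}`. -/
def shiftZ2 {A : Type*} (v : ℤ × ℤ) (x : ℤ × ℤ → A) : ℤ × ℤ → A :=
  fun u => x (u + v)

/-- The product topology on the full shift `A^{ℤ²}`, with `A` discrete. -/
def fullShiftTopZ2 (A : Type*) : TopologicalSpace (ℤ × ℤ → A) :=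
  @Pi.topologicalSpace (ℤ × ℤ) (fun _ => A) (fun _ => ⊥)

/-- `(u,v)` is an `n`-aperiodic pair for `x`: `u ≡ v (mod n)` coordinatewise
and `x_u ≠ x_v`. -/
def IsAperiodicPair {A : Type*} (n : ℕ) (x : ℤ × ℤ → A) (u v : ℤ × ℤ) : Prop :=
  (n : ℤ) ∣ (u.1 - v.1) ∧ (n : ℤ) ∣ (u.2 - v.2) ∧ x u ≠ x v

/-- The subshift `X_{(R_n)}`: all configurations `x ∈ {0,1}^{ℤ²}` such that
for every `n ≥ 1` and all `a, b ∈ ℤ`, the square `[a, a+R_n] × [b, b+R_n]`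
contains an `n`-aperiodic pair for `x`. -/
def XR (R : ℕ → ℕ) : Set (ℤ × ℤ → Bool) :=
  {x | ∀ n : ℕ, 1 ≤ n → ∀ a b : ℤ, ∃ u v : ℤ × ℤ,
    a ≤ u.1 ∧ u.1 ≤ a + R n ∧ b ≤ u.2 ∧ u.2 ≤ b + R n ∧
    a ≤ v.1 ∧ v.1 ≤ a + R n ∧ b ≤ v.2 ∧ v.2 ≤ b + R n ∧
    IsAperiodicPair n x u v}

/-- The scale `n_k`. -/
def scaleN (k : ℕ) : ℕ := 2 ^ (Nat.pair k (2 ^ k) + 3)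

/-- Column `i` carries the label `p`. -/
def ColLabel (p : ℕ) (i : ℤ) : Prop := (2 : ℤ) ^ (p + 2) ∣ i - 1 - 2 ^ (p + 1)

lemma colLabel_aux {p q : ℕ} {i : ℤ} (hpq : p < q) (hp : ColLabel p i) (hq : ColLabel q i) :
    False := by
  unfold ColLabel at *
  have h1 : (2 : ℤ) ^ (p + 2) ∣ 2 ^ (q + 2) := pow_dvd_pow _ (by omega)
  have h2 : (2 : ℤ) ^ (p + 2) ∣ 2 ^ (q + 1) := pow_dvd_pow _ (by omega)
  have h3 := dvd_sub ((dvd_add (h1.trans hq) h2)) hp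
  have h4 : (2 : ℤ) ^ (p + 2) ∣ 2 ^ (p + 1) := by
    have e : i - 1 - 2 ^ (q + 1) + 2 ^ (q + 1) - (i - 1 - 2 ^ (p + 1)) = (2 : ℤ) ^ (p + 1) := by
      ring
    rwa [e] at h3
  have h5 := Int.le_of_dvd (by positivity) h4
  have h6 : (2 : ℤ) ^ (p + 1) < 2 ^ (p + 2) := pow_lt_pow_right₀ (by norm_num) (by omega)
  omega

lemma colLabel_unique {p q : ℕ} {i : ℤ} (hp : ColLabel p i) (hq : ColLabel q i) : p = q := by
  rcases lt_trichotomy p q with h | h | h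
  · exact (colLabel_aux h hp hq).elim
  · exact h
  · exact (colLabel_aux h hq hp).elim

lemma colLabel_odd {p : ℕ} {i : ℤ} (hp : ColLabel p i) : i % 2 = 1 := by
  obtain ⟨c, hc⟩ := hp
  have e1 : (2 : ℤ) ^ (p + 1) = 2 ^ p * 2 := pow_succ _ _
  have e2 : (2 : ℤ) ^ (p + 2) = 2 ^ p * 2 * 2 := by rw [pow_succ, pow_succ]
  rw [e1, e2] at hc
  have : i = 1 + 2 * (2 ^ p + 2 ^ p * 2 * c) := by linarith
  omega

lemma scaleN_pos (k : ℕ) : 0 < scaleN k := by unfold scaleN; positivity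

lemma colLabel_exists (k r : ℕ) (hr : r ≤ 2 ^ k) (a : ℤ) :
    ∃ i : ℤ, a ≤ i ∧ i ≤ a + scaleN k ∧ ColLabel (Nat.pair k r) i := by
  set p := Nat.pair k r with hp
  have hle : p ≤ Nat.pair k (2 ^ k) := by
    rcases hr.eq_or_lt with h | h
    · rw [hp, h]
    · exact (Nat.pair_lt_pair_right k h).le
  have hP : (2 : ℤ) ^ (p + 2) ≤ scaleN k := by
    unfold scaleN
    push_cast
    exact pow_le_pow_right₀ (by norm_num) (by omega)
  have hpos : (0 : ℤ) < 2 ^ (p + 2) := by positivity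
  refine ⟨a + (1 + 2 ^ (p + 1) - a) % 2 ^ (p + 2), ?_, ?_, ?_⟩
  · have := Int.emod_nonneg (1 + 2 ^ (p + 1) - a) hpos.ne'
    omega
  · have := Int.emod_lt_of_pos (1 + 2 ^ (p + 1) - a) hpos
    omega
  · unfold ColLabel
    have h := Int.mul_ediv_add_emod (1 + 2 ^ (p + 1) - a) (2 ^ (p + 2))
    refine ⟨-((1 + 2 ^ (p + 1) - a) / 2 ^ (p + 2)), ?_⟩
    linarith

open Classical in
/-- The base configuration. -/
noncomputable def baseCfg (u : ℤ × ℤ) : Bool :=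
  decide (∃ k r : ℕ, r ≤ 2 ^ k ∧ ColLabel (Nat.pair k r) u.1 ∧
    (u.2 / (scaleN k : ℤ)) % (2 ^ k + 1) = r)

lemma baseCfg_even (i j : ℤ) (hi : i % 2 = 0) : baseCfg (i, j) = false := by
  unfold baseCfg
  simp only [decide_eq_false_iff_not]
  rintro ⟨k, r, -, h, -⟩
  have := colLabel_odd h
  omega

lemma baseCfg_label (k r : ℕ) (hr : r ≤ 2 ^ k) (i j : ℤ) (h : ColLabel (Nat.pair k r) i) :
    baseCfg (i, j) = true ↔ (j / (scaleN k : ℤ)) % (2 ^ k + 1) = r := by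
  unfold baseCfg
  simp only [decide_eq_true_eq]
  constructor
  · rintro ⟨k', r', -, h1, h2⟩
    have := colLabel_unique h h1
    obtain ⟨rfl, rfl⟩ := Nat.pair_eq_pair.1 this
    exact h2
  · intro h2
    exact ⟨k, r, hr, h, h2⟩

/-- Two rows whose levels at scale `k` differ by `1 ≤ s ≤ 2^k` differ on every window. -/
lemma baseCfg_rows (k : ℕ) (t t' s : ℤ) (hs1 : 1 ≤ s) (hs2 : s ≤ 2 ^ k)
    (ht : t' / (scaleN k : ℤ) = t / (scaleN k : ℤ) + s) (a : ℤ) :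
    ∃ i : ℤ, a ≤ i ∧ i ≤ a + scaleN k ∧ baseCfg (i, t) ≠ baseCfg (i, t') := by
  have hM : (0 : ℤ) < 2 ^ k + 1 := by positivity
  set q := t / (scaleN k : ℤ) with hq
  have h0 := Int.emod_nonneg q hM.ne'
  have h1 := Int.emod_lt_of_pos q hM
  obtain ⟨r, hr⟩ := Int.eq_ofNat_of_zero_le h0
  have hr2 : r ≤ 2 ^ k := by
    have : (r : ℤ) ≤ 2 ^ k := by omega
    exact_mod_cast this
  obtain ⟨i, hi1, hi2, hi3⟩ := colLabel_exists k r hr2 a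
  refine ⟨i, hi1, hi2, fun he => ?_⟩
  have e1 := (baseCfg_label k r hr2 i t hi3).2 hr
  rw [he] at e1
  have e2 := (baseCfg_label k r hr2 i t' hi3).1 e1
  rw [ht, ← hr] at e2
  have e3 : (2 ^ k + 1 : ℤ) ∣ s := by
    have := (Int.emod_emod_of_dvd q (dvd_refl (2 ^ k + 1 : ℤ)))
    have := Int.dvd_of_emod_eq_zero (Int.emod_eq_emod_iff_emod_sub_eq_zero.1 e2)
    simpa using this
  have := Int.le_of_dvd (by omega) e3
  omega

/-- The periods with a tight window. -/
def TightPeriod (m : ℕ) : Prop := ∃ k j : ℕ, 1 ≤ j ∧ j ≤ 2 ^ k ∧ m = j * scaleN k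

open Classical in
/-- The sequence `R`. -/
noncomputable def seqR (m : ℕ) : ℕ := if TightPeriod m then m else 2 * scaleN m

lemma le_scaleN (k : ℕ) : 2 * k ≤ scaleN k := by
  unfold scaleN
  have h1 : k ≤ Nat.pair k (2 ^ k) := Nat.left_le_pair _ _
  have h2 : 2 ^ k ≤ 2 ^ Nat.pair k (2 ^ k) := Nat.pow_le_pow_right (by norm_num) h1
  have h3 : k < 2 ^ k := Nat.lt_two_pow_self
  rw [pow_add]
  omega

lemma le_seqR (m : ℕ) : m ≤ seqR m := by
  unfold seqR
  have := le_scaleN m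
  split_ifs <;> omega

lemma baseCfg_mem : baseCfg ∈ XR seqR := by
  intro m hm a b
  by_cases hT : TightPeriod m
  · have hR : seqR m = m := by simp [seqR, hT]
    rw [hR]
    obtain ⟨k, j, hj1, hj2, rfl⟩ := hT
    have hn : (0 : ℤ) < scaleN k := by exact_mod_cast scaleN_pos k
    have hnm : (scaleN k : ℤ) ≤ ((j * scaleN k : ℕ) : ℤ) := by
      exact_mod_cast Nat.le_mul_of_pos_left _ hj1
    obtain ⟨i, hi1, hi2, hi3⟩ := baseCfg_rows k b (b + (j * scaleN k : ℕ)) j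
      (by exact_mod_cast hj1) (by exact_mod_cast hj2)
      (by push_cast; exact Int.add_mul_ediv_right _ _ hn.ne') a
    refine ⟨(i, b), (i, b + (j * scaleN k : ℕ)), hi1, by simp only; omega, le_refl _,
      by simp only; omega, hi1, by simp only; omega, by simp only; omega, le_refl _, ?_, ?_, hi3⟩
    · simp
    · simp only [sub_add_cancel_left, dvd_neg, dvd_refl]
  · have hR : seqR m = 2 * scaleN m := by simp [seqR, hT]
    rw [hR]
    have hn : (0 : ℤ) < scaleN m := by exact_mod_cast scaleN_pos m
    have hmn : 2 * (m : ℤ) ≤ scaleN m := by exact_mod_cast le_scaleN m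
    set n : ℤ := (scaleN m : ℤ) with hnd
    set q := b / n with hq
    have hb := Int.mul_ediv_add_emod b n
    have hb1 := Int.emod_nonneg b hn.ne'
    have hb2 := Int.emod_lt_of_pos b hn
    rw [← hq] at hb
    set t : ℤ := n * q + (n - 1) with ht
    have hd1 : t / n = q := by
      rw [ht, Int.mul_add_ediv_left _ _ hn.ne', Int.ediv_eq_zero_of_lt (by omega) (by omega)]
      simp
    have hd2 : (t + m) / n = q + 1 := by
      have : t + m = n * (q + 1) + (m - 1) := by rw [ht]; ring
      rw [this, Int.mul_add_ediv_left _ _ hn.ne', Int.ediv_eq_zero_of_lt (by omega) (by omega)]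
      simp
    obtain ⟨i, hi1, hi2, hi3⟩ := baseCfg_rows m t (t + m) 1 le_rfl
      (one_le_pow₀ (by norm_num)) (by rw [← hnd, hd1, hd2]) a
    refine ⟨(i, t), (i, t + m), hi1, ?_, ?_, ?_, hi1, ?_, ?_, ?_, ?_, ?_, hi3⟩
    all_goals try (simp only; push_cast; omega)
    · simp
    · simp

lemma reflect_mem (R : ℕ → ℕ) (x : ℤ × ℤ → Bool) (hx : x ∈ XR R) :
    (fun u : ℤ × ℤ => x (u.1, -u.2)) ∈ XR R := by
  intro n hn a b
  obtain ⟨u, v, h1, h2, h3, h4, h5, h6, h7, h8, h9, h10, h11⟩ := hx n hn a (-b - R n)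
  refine ⟨(u.1, -u.2), (v.1, -v.2), h1, h2, ?_, ?_, h5, h6, ?_, ?_, h9, ?_, ?_⟩
  all_goals try (simp only; omega)
  · have := (dvd_neg.2 h10)
    have e : -u.2 - -v.2 = -(u.2 - v.2) := by ring
    simp only [e]
    exact this
  · simpa using h11

lemma shift_mem (R : ℕ → ℕ) (w : ℤ × ℤ) (x : ℤ × ℤ → Bool) (hx : x ∈ XR R) :
    shiftZ2 w x ∈ XR R := by
  intro n hn a b
  obtain ⟨u, v, h1, h2, h3, h4, h5, h6, h7, h8, h9, h10, h11⟩ := hx n hn (a + w.1) (b + w.2)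
  refine ⟨u - w, v - w, ?_, ?_, ?_, ?_, ?_, ?_, ?_, ?_, ?_, ?_, ?_⟩
  all_goals try (simp only [Prod.fst_sub, Prod.snd_sub]; omega)
  · simpa using h9
  · simpa using h10
  · simpa [shiftZ2] using h11

lemma closed_XR (R : ℕ → ℕ) : @IsClosed _ (fullShiftTopZ2 Bool) (XR R) := by
  change IsClosed (XR R)
  have : XR R = ⋂ (n : ℕ) (_ : 1 ≤ n) (a : ℤ) (b : ℤ),
      ⋃ p ∈ {p : (ℤ × ℤ) × (ℤ × ℤ) |
        p ∈ (Set.Icc a (a + R n) ×ˢ Set.Icc b (b + R n)) ×ˢ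
          (Set.Icc a (a + R n) ×ˢ Set.Icc b (b + R n)) ∧
        (n : ℤ) ∣ (p.1.1 - p.2.1) ∧ (n : ℤ) ∣ (p.1.2 - p.2.2)},
      {x : ℤ × ℤ → Bool | x p.1 ≠ x p.2} := by
    ext x
    simp only [XR, IsAperiodicPair, Set.mem_iInter, Set.mem_iUnion, Set.mem_setOf_eq,
      Set.mem_prod, Set.mem_Icc]
    refine forall_congr' fun n => forall_congr' fun _ => forall_congr' fun a =>
      forall_congr' fun b => ?_
    constructor
    · rintro ⟨u, v, h1, h2, h3, h4, h5, h6, h7, h8, h9, h10, h11⟩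
      exact ⟨(u, v), ⟨⟨⟨⟨h1, h2⟩, h3, h4⟩, ⟨h5, h6⟩, h7, h8⟩, h9, h10⟩, h11⟩
    · rintro ⟨⟨u, v⟩, ⟨⟨⟨⟨h1, h2⟩, h3, h4⟩, ⟨h5, h6⟩, h7, h8⟩, h9, h10⟩, h11⟩
      exact ⟨u, v, h1, h2, h3, h4, h5, h6, h7, h8, h9, h10, h11⟩
  rw [this]
  refine isClosed_iInter fun n => isClosed_iInter fun _ => isClosed_iInter fun a =>
    isClosed_iInter fun b => ?_
  refine Set.Finite.isClosed_biUnion ?_ ?_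
  · refine Set.Finite.subset (s := (Set.Icc a (a + R n) ×ˢ Set.Icc b (b + R n)) ×ˢ
          (Set.Icc a (a + R n) ×ˢ Set.Icc b (b + R n))) ?_ (fun p hp => hp.1)
    have h1 := Set.finite_Icc a (a + R n)
    have h2 := Set.finite_Icc b (b + R n)
    exact (h1.prod h2).prod (h1.prod h2)
  · intro p _
    have hc : Continuous (fun x : ℤ × ℤ → Bool => (x p.1, x p.2)) := by fun_prop
    exact (isClosed_discrete {q : Bool × Bool | q.1 ≠ q.2}).preimage hc

lemma not_glue (g : ℝ) (hg : 0 ≤ g) :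
    ¬ (∀ E F : Set (ℤ × ℤ),
            (∀ u ∈ E, ∀ v ∈ F, edistZ2 u v > g) →
            ∀ x ∈ XR seqR, ∀ y ∈ XR seqR,
              ∃ z ∈ XR seqR, (∀ u ∈ E, z u = x u) ∧ (∀ u ∈ F, z u = y u)) := by
  intro H
  set h : ℕ := ⌊g⌋₊ + 1 with hh
  have hgh : g < h := by rw [hh]; exact_mod_cast Nat.lt_floor_add_one g
  obtain ⟨z, hz, hzE, hzF⟩ := H {u | u.2 ≤ 0} {u | (h : ℤ) ≤ u.2} (by
    intro u hu v hv
    simp only [Set.mem_setOf_eq] at hu hv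
    have h1 : (h : ℤ) ≤ v.2 - u.2 := by omega
    have h2 : (h : ℝ) ≤ ((v.2 - u.2 : ℤ) : ℝ) := by exact_mod_cast h1
    refine lt_of_lt_of_le hgh ?_
    unfold edistZ2
    apply Real.le_sqrt_of_sq_le
    push_cast at h2 ⊢
    have h0 : (0 : ℝ) ≤ h := by positivity
    nlinarith [sq_nonneg ((u.1 : ℝ) - v.1)]) baseCfg baseCfg_mem _ (reflect_mem _ _ baseCfg_mem)
  simp only [Set.mem_setOf_eq] at hzE hzF
  have hn2 : ∃ n' : ℕ, scaleN h = 2 * n' :=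
    ⟨2 ^ (Nat.pair h (2 ^ h) + 2), by unfold scaleN; rw [pow_succ]; ring⟩
  obtain ⟨n', hn'⟩ := hn2
  have hnn := le_scaleN h
  -- pigeonhole on columns
  let f : Fin (2 ^ h + 1) → (Fin h → Bool) := fun i s => z ((i.val : ℤ) * scaleN h, (s.val : ℤ))
  have hf : ¬ Function.Injective f := by
    intro hinj
    have := Fintype.card_le_of_injective f hinj
    simp at this
  have hf2 : ∃ i j : Fin (2 ^ h + 1), i < j ∧ f i = f j := by
    unfold Function.Injective at hf
    push Not at hf
    obtain ⟨i, j, h1, h2⟩ := hf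
    rcases lt_or_gt_of_ne h2 with h3 | h3
    · exact ⟨i, j, h3, h1⟩
    · exact ⟨j, i, h3, h1.symm⟩
  obtain ⟨i, j, hij, hfij⟩ := hf2
  have hij' : i.val < j.val := hij
  have hj := j.isLt
  have hcol : ∀ t : ℤ, z ((i.val : ℤ) * scaleN h, t) = z ((j.val : ℤ) * scaleN h, t) := by
    intro t
    have ev : ∀ c : ℕ, ((c : ℤ) * scaleN h) % 2 = 0 := by
      intro c
      rw [hn']
      push_cast
      rw [mul_left_comm]
      exact Int.mul_emod_right _ _
    by_cases h1 : t ≤ 0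
    · rw [hzE _ h1, hzE _ h1, baseCfg_even _ _ (ev _), baseCfg_even _ _ (ev _)]
    by_cases h2 : (h : ℤ) ≤ t
    · rw [hzF _ h2, hzF _ h2]
      simp only
      rw [baseCfg_even _ _ (ev _), baseCfg_even _ _ (ev _)]
    · obtain ⟨s, rfl⟩ := Int.eq_ofNat_of_zero_le (by omega : 0 ≤ t)
      exact congrFun hfij ⟨s, by omega⟩
  obtain ⟨d, hd⟩ : ∃ d, j.val = i.val + d := ⟨j.val - i.val, by omega⟩
  have hd1 : 1 ≤ d := by omega
  have hrow : ∀ c : ℤ, z (c, -((d * n' : ℕ) : ℤ)) = z (c, ((d * n' : ℕ) : ℤ)) := by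
    intro c
    have h1 : n' ≤ d * n' := Nat.le_mul_of_pos_left _ hd1
    rw [hzE _ (by simp only; omega), hzF _ (by simp only; omega)]
  have hT : TightPeriod (d * scaleN h) := ⟨h, d, hd1, by omega, rfl⟩
  have hR : seqR (d * scaleN h) = d * scaleN h := by simp [seqR, hT]
  have hpos : 0 < d * scaleN h := Nat.mul_pos hd1 (scaleN_pos h)
  obtain ⟨u, v, h1, h2, h3, h4, h5, h6, h7, h8, h9, h10, h11⟩ :=
    hz (d * scaleN h) hpos ((i.val : ℤ) * scaleN h) (-((d * n' : ℕ) : ℤ))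
  rw [hR] at h2 h4 h6 h8
  have hm2 : d * scaleN h = 2 * (d * n') := by rw [hn']; ring
  have hjm : (j.val : ℤ) * scaleN h = (i.val : ℤ) * scaleN h + ((d * scaleN h : ℕ) : ℤ) := by
    rw [hd]; push_cast; ring
  rw [hjm] at hcol
  generalize (i.val : ℤ) * scaleN h = A at *
  generalize d * n' = B at *
  generalize d * scaleN h = m at *
  subst hm2
  have key : ∀ (e e' L : ℤ), L ≤ e → e ≤ L + ((2 * B : ℕ) : ℤ) → L ≤ e' →
      e' ≤ L + ((2 * B : ℕ) : ℤ) → ((2 * B : ℕ) : ℤ) ∣ e - e' →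
      e = e' ∨ (e = L ∧ e' = L + ((2 * B : ℕ) : ℤ)) ∨ (e' = L ∧ e = L + ((2 * B : ℕ) : ℤ)) := by
    intro e e' L k1 k2 k3 k4 k5
    by_cases k : e = e'
    · exact Or.inl k
    rcases lt_or_gt_of_ne k with k | k
    · have := Int.le_of_dvd (by omega) ((dvd_sub_comm).1 k5)
      omega
    · have := Int.le_of_dvd (by omega) k5
      omega
  have c1 : ∀ t, z (u.1, t) = z (v.1, t) := by
    intro t
    rcases key _ _ _ h1 h2 h5 h6 h9 with k | ⟨k, k'⟩ | ⟨k, k'⟩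
    · rw [k]
    · rw [k, k']; exact hcol t
    · rw [k, k']; exact (hcol t).symm
  have c2 : ∀ c, z (c, u.2) = z (c, v.2) := by
    intro c
    have e : -(B : ℤ) + ((2 * B : ℕ) : ℤ) = B := by push_cast; ring
    rcases key _ _ _ h3 h4 h7 h8 h10 with k | ⟨k, k'⟩ | ⟨k, k'⟩
    · rw [k]
    · rw [k, k', e]; exact hrow c
    · rw [k, k', e]; exact (hrow c).symm
  exact h11 ((c1 u.2).trans (c2 v.1))

/-- There is a sequence `(R_n)` of positive integers tending to infinity such
that `X_{(R_n)} ⊆ {0,1}^{ℤ²}` is nonempty (and closed and shift-invariant),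
but for every `g ≥ 0` it is not strongly irreducible with gap `g`. -/
theorem exists_XR_nonempty_not_SI :
    ∃ R : ℕ → ℕ,
      (∀ n, 1 ≤ n → 1 ≤ R n) ∧
      Filter.Tendsto R Filter.atTop Filter.atTop ∧
      (XR R).Nonempty ∧
      @IsClosed _ (fullShiftTopZ2 Bool) (XR R) ∧
      (∀ v : ℤ × ℤ, ∀ x ∈ XR R, shiftZ2 v x ∈ XR R) ∧
      (∀ g : ℝ, 0 ≤ g →
        ¬ (∀ E F : Set (ℤ × ℤ),
            (∀ u ∈ E, ∀ v ∈ F, edistZ2 u v > g) →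
            ∀ x ∈ XR R, ∀ y ∈ XR R,
              ∃ z ∈ XR R, (∀ u ∈ E, z u = x u) ∧ (∀ u ∈ F, z u = y u))) := by
  exact ⟨seqR, fun n hn => hn.trans (le_seqR n),
    Filter.tendsto_atTop_mono le_seqR Filter.tendsto_id, ⟨_, baseCfg_mem⟩, closed_XR _,
    fun v x hx => shift_mem _ v x hx, not_glue⟩
end

section
/- For all integers k ≥ 1 and n ≥ 1, if n ≥ 2^k then the coin-and-bucket configuration c_{k,n} is unorientable: no finite sequence of legal moves starting from c_{k,n} reaches an oriented configuration. -/
/-- A coin-and-bucket configuration with `k` buckets: each bucket records its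
number of heads-coins and its number of tails-coins. -/
def CBConfig (k : ℕ) := Fin k → ℕ × ℕ

/-- The number of coins of orientation `σ` (`true` = heads, `false` = tails)
in a bucket. -/
def coinCount (p : ℕ × ℕ) (σ : Bool) : ℕ := if σ then p.1 else p.2

/-- Remove one coin of orientation `σ` from bucket `i`. -/
def removeCoin {k : ℕ} (c : CBConfig k) (i : Fin k) (σ : Bool) : CBConfig k :=
  Function.update c i (if σ then ((c i).1 - 1, (c i).2) else ((c i).1, (c i).2 - 1))

/-- Add one coin of orientation `σ` to bucket `j`. -/
def addCoin {k : ℕ} (c : CBConfig k) (j : Fin k) (σ : Bool) : CBConfig k :=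
  Function.update c j (if σ then ((c j).1 + 1, (c j).2) else ((c j).1, (c j).2 + 1))

/-- A legal move: choose buckets `i, j` and an orientation `σ` such that bucket
`i` has a `σ`-coin; remove one `σ`-coin from `i` and add a coin of orientation
`σ'` to `j`, where `σ'` must be the strictly less common orientation in bucket
`j` before the addition (free choice in case of a tie). -/
def CBMove {k : ℕ} (c c' : CBConfig k) : Prop :=
  ∃ (i j : Fin k) (σ σ' : Bool),
    1 ≤ coinCount (c i) σ ∧
    ((removeCoin c i σ j).1 < (removeCoin c i σ j).2 → σ' = true) ∧
    ((removeCoin c i σ j).2 < (removeCoin c i σ j).1 → σ' = false) ∧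
    c' = addCoin (removeCoin c i σ) j σ'

/-- A configuration is oriented if every bucket contains coins of only one
orientation. -/
def CBOriented {k : ℕ} (c : CBConfig k) : Prop :=
  ∀ i, (c i).1 = 0 ∨ (c i).2 = 0

/-- A configuration is orientable if a finite sequence of legal moves leads
from it to an oriented configuration. -/
def CBOrientable {k : ℕ} (c : CBConfig k) : Prop :=
  ∃ c', Relation.ReflTransGen CBMove c c' ∧ CBOriented c'

/-- The configuration `c_{k,n}`: bucket `1` contains `⌊n/2⌋` heads and
`⌈n/2⌉` tails, all other buckets are empty. -/
def cbInit (k n : ℕ) : CBConfig k :=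
  fun i => if (i : ℕ) = 0 then (n / 2, n - n / 2) else (0, 0)

open Finset in
/-- Weighted sum over buckets after updating a bucket. -/
theorem cb_sum_update {k : ℕ} (g : Fin k → ℕ × ℕ → ℕ) (c : Fin k → ℕ × ℕ) (j : Fin k)
    (v : ℕ × ℕ) :
    (∑ x, g x (Function.update c j v x)) + g j (c j) = (∑ x, g x (c x)) + g j v := by
  rw [← Finset.add_sum_erase _ _ (Finset.mem_univ j),
    ← Finset.add_sum_erase _ (fun x => g x (c x)) (Finset.mem_univ j)]
  have : ∑ x ∈ univ.erase j, g x (Function.update c j v x) = ∑ x ∈ univ.erase j, g x (c x) := by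
    apply Finset.sum_congr rfl
    intro x hx
    rw [Function.update_of_ne (Finset.ne_of_mem_erase hx)]
  rw [this]
  simp only [Function.update_self]
  omega

/-- The number of free coins of a bucket, given the set of unlocked buckets. -/
def cbW {k : ℕ} (S : Finset (Fin k)) (j : Fin k) (p : ℕ × ℕ) : ℕ :=
  if j ∈ S then p.1 + p.2 else min p.1 p.2

/-- The total number of free coins. -/
def cbF {k : ℕ} (S : Finset (Fin k)) (c : CBConfig k) : ℕ := ∑ x, cbW S x (c x)

theorem cbW_le {k : ℕ} (S : Finset (Fin k)) (c : CBConfig k) (j : Fin k) :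
    cbW S j (c j) ≤ cbF S c :=
  Finset.single_le_sum (f := fun x => cbW S x (c x)) (fun _ _ => Nat.zero_le _)
    (Finset.mem_univ j)

/-- The stuck condition is preserved by reversed moves. -/
theorem cb_step {k : ℕ} (S : Finset (Fin k)) (B : ℕ) (c c' : CBConfig k) (hm : CBMove c c')
    (hF : cbF S c' ≤ B) (hM : ∀ i, i ∉ S → B + 2 ≤ max (c' i).1 (c' i).2) :
    cbF S c ≤ B ∧ ∀ i, i ∉ S → B + 2 ≤ max (c i).1 (c i).2 := by
  obtain ⟨i, j, σ, σ', h1, h2, h3, rfl⟩ := hm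
  have hd : cbF S (removeCoin c i σ) + 1 ≤ B ∧
      ∀ x, x ∉ S → B + 2 ≤ max (removeCoin c i σ x).1 (removeCoin c i σ x).2 := by
    generalize removeCoin c i σ = d at *
    have e := cb_sum_update (cbW S) d j
      (if σ' then ((d j).1 + 1, (d j).2) else ((d j).1, (d j).2 + 1))
    change cbF S (addCoin d j σ') + _ = cbF S d + _ at e
    have hle := cbW_le S (addCoin d j σ') j
    have hMj := hM j
    have hj : addCoin d j σ' j = if σ' then ((d j).1 + 1, (d j).2) else ((d j).1, (d j).2 + 1) :=
      Function.update_self ..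
    rw [hj] at hle hMj
    constructor
    · unfold cbW at e hle
      by_cases hS : j ∈ S <;> cases σ' <;> simp [hS] at * <;> omega
    · intro x hx
      by_cases hxj : x = j
      · subst hxj
        unfold cbW at e hle
        cases σ' <;> simp [hx] at * <;> omega
      · have := hM x hx
        have hx' : addCoin d j σ' x = d x := Function.update_of_ne hxj ..
        rwa [hx'] at this
  have e := cb_sum_update (cbW S) c i
      (if σ then ((c i).1 - 1, (c i).2) else ((c i).1, (c i).2 - 1))
  change cbF S (removeCoin c i σ) + _ = cbF S c + _ at e
  obtain ⟨hd1, hd2⟩ := hd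
  constructor
  · unfold cbW at e
    unfold coinCount at h1
    clear hM hF h2 h3 hd2
    by_cases hS : i ∈ S <;> cases σ <;> simp [hS] at * <;> omega
  · intro x hx
    have := hd2 x hx
    by_cases hxj : x = i
    · subst hxj
      have hj : removeCoin c x σ x =
        if σ then ((c x).1 - 1, (c x).2) else ((c x).1, (c x).2 - 1) := Function.update_self ..
      rw [hj] at this
      clear hM hF h2 h3 hd2 e hj
      cases σ <;> simp at * <;> omega
    · have hx' : removeCoin c i σ x = c x := Function.update_of_ne hxj ..
      rwa [hx'] at this

/-- The number of coins is preserved by moves. -/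
theorem cb_total {k : ℕ} (c c' : CBConfig k) (hm : CBMove c c') :
    ∑ x, ((c' x).1 + (c' x).2) = ∑ x, ((c x).1 + (c x).2) := by
  obtain ⟨i, j, σ, σ', h1, -, -, rfl⟩ := hm
  have e1 := cb_sum_update (fun _ p => p.1 + p.2) c i
      (if σ then ((c i).1 - 1, (c i).2) else ((c i).1, (c i).2 - 1))
  change (∑ x, ((removeCoin c i σ x).1 + (removeCoin c i σ x).2)) + _ = _ at e1
  generalize removeCoin c i σ = d at *
  have e2 := cb_sum_update (fun _ p => p.1 + p.2) d j
      (if σ' then ((d j).1 + 1, (d j).2) else ((d j).1, (d j).2 + 1))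
  change (∑ x, ((addCoin d j σ' x).1 + (addCoin d j σ' x).2)) + _ = _ at e2
  unfold coinCount at h1
  cases σ <;> cases σ' <;> simp at e1 e2 h1 <;> omega

/-- An oriented configuration with at least `2 ^ k` coins is stuck. -/
theorem cb_oriented {k : ℕ} (c : CBConfig k) (ho : CBOriented c)
    (h : 2 ^ k ≤ ∑ x, ((c x).1 + (c x).2)) :
    ∃ (S : Finset (Fin k)) (B : ℕ), (∃ i, i ∉ S) ∧ cbF S c ≤ B ∧
      ∀ i, i ∉ S → B + 2 ≤ max (c i).1 (c i).2 := by
  classical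
  let P : Finset (Fin k) → Prop := fun S => ∑ x ∈ S, ((c x).1 + (c x).2) + 1 ≤ 2 ^ S.card
  obtain ⟨S, hS, hmax⟩ := Finset.exists_max_image (Finset.univ.filter P) Finset.card
    ⟨∅, by simp [P]⟩
  have hPS : P S := (Finset.mem_filter.1 hS).2
  refine ⟨S, ∑ x ∈ S, ((c x).1 + (c x).2), ?_, ?_, ?_⟩
  · by_contra hcon
    push Not at hcon
    have : S = Finset.univ := Finset.eq_univ_iff_forall.2 hcon
    subst this
    simp only [P, Finset.card_univ, Fintype.card_fin] at hPS
    omega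
  · apply le_of_eq
    unfold cbF
    rw [← Finset.sum_subset (Finset.subset_univ S)]
    · apply Finset.sum_congr rfl
      intro x hx
      simp [cbW, hx]
    · intro x _ hx
      have := ho x
      simp only [cbW, hx, if_false]
      omega
  · intro i hi
    by_contra hlt
    have hP : P (insert i S) := by
      simp only [P] at hPS ⊢
      rw [Finset.sum_insert hi, Finset.card_insert_of_notMem hi, pow_succ]
      have := ho i
      omega
    have := hmax _ (Finset.mem_filter.2 ⟨Finset.mem_univ _, hP⟩)
    rw [Finset.card_insert_of_notMem hi] at this
    omega

/-- If `n ≥ 2^k` then the coin-and-bucket configuration `c_{k,n}` is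
unorientable: no finite sequence of legal moves reaches an oriented
configuration. -/
theorem cbInit_unorientable (k n : ℕ) (hk : 1 ≤ k) (hn : 1 ≤ n)
    (h : 2 ^ k ≤ n) : ¬ CBOrientable (cbInit k n) := by
  rintro ⟨c', hr, ho⟩
  have htot : ∑ x, ((c' x).1 + (c' x).2) = ∑ x, ((cbInit k n x).1 + (cbInit k n x).2) := by
    clear ho
    induction hr with
    | refl => rfl
    | tail _ hm ih => rw [cb_total _ _ hm, ih]
  have hinit : n ≤ ∑ x, ((cbInit k n x).1 + (cbInit k n x).2) := by
    have := Finset.single_le_sum (f := fun x => (cbInit k n x).1 + (cbInit k n x).2)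
      (fun _ _ => Nat.zero_le _) (Finset.mem_univ (⟨0, hk⟩ : Fin k))
    refine le_trans ?_ this
    simp only [cbInit, if_true]
    omega
  obtain ⟨S, B, ⟨i, hi⟩, hF, hM⟩ := cb_oriented c' ho (by omega)
  have key : cbF S (cbInit k n) ≤ B ∧
      ∀ i, i ∉ S → B + 2 ≤ max (cbInit k n i).1 (cbInit k n i).2 := by
    clear htot ho
    induction hr with
    | refl => exact ⟨hF, hM⟩
    | tail _ hm ih =>
      obtain ⟨a, b⟩ := cb_step S B _ _ hm hF hM
      exact ih a b
  have h1 := key.2 i hi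
  have h2 := (cbW_le S (cbInit k n) i).trans key.1
  simp only [cbW, hi, if_false] at h2
  unfold cbInit at h1 h2
  split_ifs at h1 h2 <;> simp at h1 h2 <;> omega
end
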